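/- Let J be a nilpotent Jordan superalgebra over ℂ of type (1,4). Then J is isomorphic, via a grading-preserving algebra isomorphism, to exactly one of the following nine superalgebras, each given on a homogeneous basis {e₁; f₁, f₂, f₃, f₄} (e₁ even, f_i odd): (1) all products zero; (2) f₁f₂ = e₁; (3) f₁f₂ = e₁, f₃f₄ = e₁; (4) e₁f₂ = f₁; (5) e₁f₂ = f₁, f₂f₃ = e₁; (6) e₁f₂ = f₁, f₃f₄ = e₁; (7) e₁f₂ = f₁, e₁f₃ = f₂; (8) e₁f₂ = f₁, e₁f₄ = f₃; (9) e₁f₂ = f₁, e₁f₄ = f₃, f₂f₄ = e₁. In particular these nine superalgebras are pairwise non-isomorphic. -/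

import Mathlib

noncomputable section

/-- The underlying ℤ/2-graded vector space of type `(m,n)`: even part `Fin m → ℂ`,
odd part `Fin n → ℂ`. -/
abbrev GV (m n : ℕ) : Type := (Fin m → ℂ) × (Fin n → ℂ)

/-- A superalgebra structure tensor of type `(m,n)`: structure constants
`c i j k` (even·even), `ρ i j k` (even·odd) and `Γ i j k` (odd·odd). -/
abbrev Tensor (m n : ℕ) : Type :=
  (Fin m → Fin m → Fin m → ℂ) × (Fin m → Fin n → Fin n → ℂ) × (Fin n → Fin n → Fin m → ℂ)

/-- The ℤ/2-graded multiplication on `GV m n` determined by a structure tensor. -/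
def mulOf {m n : ℕ} (μ : Tensor m n) (x y : GV m n) : GV m n :=
  (fun k => (∑ i, ∑ j, x.1 i * y.1 j * μ.1 i j k) + ∑ i, ∑ j, x.2 i * y.2 j * μ.2.2 i j k,
   fun k => (∑ i, ∑ j, x.1 i * y.2 j * μ.2.1 i j k) + ∑ i, ∑ j, y.1 i * x.2 j * μ.2.1 i j k)

/-- `x` is homogeneous of parity `p` (`p = 0`: even, `p = 1`: odd). -/
def IsHom {m n : ℕ} (p : ℕ) (x : GV m n) : Prop :=
  (p = 0 ∧ x.2 = 0) ∨ (p = 1 ∧ x.1 = 0)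

/-- The sign `(-1)^k`. -/
def sgn (k : ℕ) : ℂ := (-1 : ℂ) ^ k

/-- The super-Jordan expression `J^s(w; x, y, z)` for homogeneous elements of
parities `pw, px, py, pz`. -/
def superJ {m n : ℕ} (μ : Tensor m n) (pw px py pz : ℕ) (w x y z : GV m n) : GV m n :=
  mulOf μ (mulOf μ w x) (mulOf μ y z)
    + sgn (px * py) • mulOf μ (mulOf μ w y) (mulOf μ x z)
    + sgn ((px + py) * pz) • mulOf μ (mulOf μ w z) (mulOf μ x y)
    - sgn (pw * px) • mulOf μ x (mulOf μ w (mulOf μ y z))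
    - sgn (py * (pw + px)) • mulOf μ y (mulOf μ w (mulOf μ x z))
    - sgn (pz * (pw + px + py)) • mulOf μ z (mulOf μ w (mulOf μ x y))

/-- `μ` is a Jordan superalgebra structure: supercommutativity and the Jordan
superidentity hold for all homogeneous elements. -/
def IsJordanSuper {m n : ℕ} (μ : Tensor m n) : Prop :=
  (∀ (px py : ℕ) (x y : GV m n), IsHom px x → IsHom py y →
      mulOf μ x y = sgn (px * py) • mulOf μ y x) ∧
  (∀ (pw px py pz : ℕ) (w x y z : GV m n),
      IsHom pw w → IsHom px x → IsHom py y → IsHom pz z →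
      superJ μ pw px py pz w x y z = 0)

/-- The product of two graded subspaces: the span of all products. -/
def mulSub {m n : ℕ} (μ : Tensor m n) (A B : Submodule ℂ (GV m n)) : Submodule ℂ (GV m n) :=
  Submodule.span ℂ {z | ∃ a ∈ A, ∃ b ∈ B, z = mulOf μ a b}

/-- The powers `J^k`: `J^1 = J` and `J^{k+1} = Σ_{i=1}^{k} J^i · J^{k+1-i}`. -/
def powT {m n : ℕ} (μ : Tensor m n) : ℕ → Submodule ℂ (GV m n)
  | 0 => ⊤
  | 1 => ⊤
  | (k + 2) => ⨆ i : Fin (k + 1), mulSub μ (powT μ ((i : ℕ) + 1)) (powT μ (k + 1 - (i : ℕ)))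
  decreasing_by
  · have := i.isLt; omega
  · omega

/-- `μ` is nilpotent: some power vanishes. -/
def IsNilpotentT {m n : ℕ} (μ : Tensor m n) : Prop :=
  ∃ k : ℕ, 1 ≤ k ∧ powT μ k = ⊥

/-- A grading-preserving algebra isomorphism between the superalgebras determined
by `μ` and `μ'`. -/
def Iso {m n : ℕ} (μ μ' : Tensor m n) : Prop :=
  ∃ (T : (Fin m → ℂ) ≃ₗ[ℂ] (Fin m → ℂ)) (S : (Fin n → ℂ) ≃ₗ[ℂ] (Fin n → ℂ)),
    ∀ x y : GV m n,
      (T ((mulOf μ x y).1), S ((mulOf μ x y).2)) = mulOf μ' (T x.1, S x.2) (T y.1, S y.2)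

/-- `μ` degenerates to `μ'`: `μ'` lies in the closure of the orbit of `μ` under
base change (in the standard topology). -/
def degenerates {m n : ℕ} (μ μ' : Tensor m n) : Prop :=
  μ' ∈ closure {ν : Tensor m n | Iso μ ν}

/-- Standard even basis vector `e_i`. -/
def eps {m n : ℕ} (i : Fin m) : GV m n := (Pi.single i 1, 0)

/-- Standard odd basis vector `f_j`. -/
def ph {m n : ℕ} (j : Fin n) : GV m n := (0, Pi.single j 1)


/-- A tensor of type (1,4) from the matrices of structure constants:
`R j k` is the coefficient of `f_k` in `e₁·f_j`; `W i j` is the coefficient of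
`e₁` in `f_i·f_j`. -/
def T14 (R W : Fin 4 → Fin 4 → ℂ) : Tensor 1 4 :=
  (fun _ _ _ => 0, fun _ => R, fun i j _ => W i j)

/-- The nine nilpotent Jordan superalgebras of type (1,4) from Table 3. -/
def A14 : Fin 9 → Tensor 1 4 :=
  ![ T14 0 0,                                                                    -- (1,4)₁
     T14 0 ![![0,1,0,0], ![-1,0,0,0], ![0,0,0,0], ![0,0,0,0]],                   -- (1,4)₂
     T14 0 ![![0,1,0,0], ![-1,0,0,0], ![0,0,0,1], ![0,0,-1,0]],                  -- (1,4)₃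
     T14 ![![0,0,0,0], ![1,0,0,0], ![0,0,0,0], ![0,0,0,0]] 0,                    -- (1,4)₄
     T14 ![![0,0,0,0], ![1,0,0,0], ![0,0,0,0], ![0,0,0,0]]
         ![![0,0,0,0], ![0,0,1,0], ![0,-1,0,0], ![0,0,0,0]],                     -- (1,4)₅
     T14 ![![0,0,0,0], ![1,0,0,0], ![0,0,0,0], ![0,0,0,0]]
         ![![0,0,0,0], ![0,0,0,0], ![0,0,0,1], ![0,0,-1,0]],                     -- (1,4)₆
     T14 ![![0,0,0,0], ![1,0,0,0], ![0,1,0,0], ![0,0,0,0]] 0,                    -- (1,4)₇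
     T14 ![![0,0,0,0], ![1,0,0,0], ![0,0,0,0], ![0,0,1,0]] 0,                    -- (1,4)₈
     T14 ![![0,0,0,0], ![1,0,0,0], ![0,0,0,0], ![0,0,1,0]]
         ![![0,0,0,0], ![0,0,0,1], ![0,0,0,0], ![0,-1,0,0]] ]                    -- (1,4)₉


/-! ## Abstract linear data -/

abbrev V4 : Type := Fin 4 → ℂ

def Lop (μ : Tensor 1 4) : V4 →ₗ[ℂ] V4 where
  toFun x := fun k => ∑ j, x j * μ.2.1 0 j k
  map_add' x y := by
    funext k
    simp [add_mul, Finset.sum_add_distrib]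
  map_smul' c x := by
    funext k
    simp [Finset.mul_sum, mul_assoc]

def omg (μ : Tensor 1 4) : V4 →ₗ[ℂ] V4 →ₗ[ℂ] ℂ :=
  LinearMap.mk₂ ℂ (fun x y => ∑ i, ∑ j, x i * y j * μ.2.2 i j 0)
    (by intro a b c; simp [add_mul, Finset.sum_add_distrib])
    (by intro a b c; simp [Finset.mul_sum, mul_assoc])
    (by intro a b c; simp [add_mul, mul_add, Finset.sum_add_distrib])
    (by intro a b c; simp [Finset.mul_sum, mul_assoc, mul_left_comm])

def econst (a : ℂ) : Fin 1 → ℂ := fun _ => a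

lemma econst_zero : econst 0 = 0 := rfl

lemma mulOf_eq (μ : Tensor 1 4) (x y : GV 1 4) :
    mulOf μ x y = (econst (x.1 0 * y.1 0 * μ.1 0 0 0 + omg μ x.2 y.2),
      x.1 0 • Lop μ y.2 + y.1 0 • Lop μ x.2) := by
  unfold mulOf
  refine Prod.ext ?_ ?_
  · funext k
    obtain rfl : k = 0 := Subsingleton.elim _ _
    simp [econst, omg]
  · funext k
    simp [Lop, Finset.mul_sum, mul_assoc]

lemma Iso.symm {m n : ℕ} {μ ν : Tensor m n} (h : Iso μ ν) : Iso ν μ := by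
  obtain ⟨T, S, h⟩ := h
  refine ⟨T.symm, S.symm, fun x y => ?_⟩
  have := h (T.symm x.1, S.symm x.2) (T.symm y.1, S.symm y.2)
  simp only [LinearEquiv.apply_symm_apply] at this
  have h1 := congrArg Prod.fst this
  have h2 := congrArg Prod.snd this
  simp only at h1 h2
  refine Prod.ext ?_ ?_
  · simp only
    rw [← h1, LinearEquiv.symm_apply_apply]
  · simp only
    rw [← h2, LinearEquiv.symm_apply_apply]

lemma Iso.trans {m n : ℕ} {μ ν ξ : Tensor m n} (h : Iso μ ν) (h' : Iso ν ξ) : Iso μ ξ := by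
  obtain ⟨T, S, h⟩ := h
  obtain ⟨T', S', h'⟩ := h'
  refine ⟨T.trans T', S.trans S', fun x y => ?_⟩
  have e1 := h x y
  have e2 := h' (T x.1, S x.2) (T y.1, S y.2)
  rw [← e1] at e2
  simpa using e2

/-! ## Isomorphism from adapted bases -/

def LI4 (a b c d : V4) : Prop :=
  ∀ α β γ δ : ℂ, α • a + β • b + γ • c + δ • d = 0 → α = 0 ∧ β = 0 ∧ γ = 0 ∧ δ = 0

lemma iso_of_basis {μ : Tensor 1 4} (hc : μ.1 0 0 0 = 0) {R W : Fin 4 → Fin 4 → ℂ}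
    (b : Fin 4 → V4) (hb : LI4 (b 0) (b 1) (b 2) (b 3))
    (hL : ∀ j, Lop μ (b j) = ∑ k, R j k • b k)
    (hW : ∀ i j, omg μ (b i) (b j) = W i j) : Iso μ (T14 R W) := by
  have hli : LinearIndependent ℂ b := by
    rw [Fintype.linearIndependent_iff]
    intro g hg i
    rw [Fin.sum_univ_four] at hg
    have := hb _ _ _ _ hg
    fin_cases i <;> simp [this]
  let B : Module.Basis (Fin 4) ℂ V4 :=
    basisOfLinearIndependentOfCardEqFinrank hli (by simp)
  have hB : ∀ i, B i = b i := fun i => by simp [B]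
  have hBe : ∀ j, B.equivFun (B j) = Pi.single j 1 := fun j => by
    funext k
    rw [Module.Basis.equivFun_self, Pi.single_apply]
    simp [eq_comm]
  have key : ∀ x, B.equivFun (Lop μ x) = Lop (T14 R W) (B.equivFun x) := by
    intro x
    have : B.equivFun.toLinearMap ∘ₗ Lop μ = Lop (T14 R W) ∘ₗ B.equivFun.toLinearMap := by
      refine B.ext fun j => ?_
      simp only [LinearMap.comp_apply, LinearEquiv.coe_coe]
      rw [hB, hL]
      simp only [← hB, map_sum, map_smul, hBe]
      funext k
      simp [Lop, T14, Pi.single_apply]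
    exact LinearMap.congr_fun this x
  have key2 : ∀ x y, omg μ x y = omg (T14 R W) (B.equivFun x) (B.equivFun y) := by
    intro x y
    have : omg μ = (omg (T14 R W)).compl₁₂ B.equivFun.toLinearMap B.equivFun.toLinearMap := by
      refine B.ext fun i => B.ext fun j => ?_
      simp only [LinearMap.compl₁₂_apply, LinearEquiv.coe_coe, hBe]
      rw [hB, hB, hW]
      simp [omg, T14, Pi.single_apply]
    rw [this]; rfl
  refine ⟨LinearEquiv.refl _ _, B.equivFun, fun x y => ?_⟩
  rw [mulOf_eq, mulOf_eq]
  refine Prod.ext ?_ ?_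
  · simp [hc, key2, T14]
  · simp only [map_add, map_smul, key, LinearEquiv.refl_apply]

/-! ## Extraction of the identities -/

lemma mul_mem_powT {m n : ℕ} (μ : Tensor m n) (k : ℕ) (u v : GV m n) (hv : v ∈ powT μ (k+1)) :
    mulOf μ u v ∈ powT μ (k+2) := by
  rw [powT]
  refine Submodule.mem_iSup_of_mem (0 : Fin (k+1)) ?_
  refine Submodule.subset_span ⟨u, ?_, v, ?_, rfl⟩
  · simp [powT]
  · simpa using hv

lemma not_nil {μ : Tensor 1 4} (h : IsNilpotentT μ)
    (h2 : ∀ k, ((econst 1, 0) : GV 1 4) ∈ powT μ k) : False := by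
  obtain ⟨k, _, hk⟩ := h
  have := h2 k
  rw [hk, Submodule.mem_bot] at this
  have := congrFun (congrArg Prod.fst this) 0
  simp [econst] at this

lemma nil_c {μ : Tensor 1 4} (h : IsNilpotentT μ) : μ.1 0 0 0 = 0 := by
  by_contra hc
  refine not_nil h fun k => ?_
  induction k with
  | zero => simp [powT]
  | succ k ih =>
    rcases k with _ | k
    · simp [powT]
    · have := (powT μ (k+2)).smul_mem (μ.1 0 0 0)⁻¹ (mul_mem_powT μ k (econst 1, 0) _ ih)
      convert this using 1
      rw [mulOf_eq]
      refine Prod.ext ?_ ?_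
      · funext i
        simp [econst, hc]
      · simp

lemma nil_om {μ : Tensor 1 4} (h : IsNilpotentT μ) (f g : V4) : omg μ f (Lop μ g) = 0 := by
  by_contra hc
  have e : ((econst 1, 0) : GV 1 4) =
      (omg μ f (Lop μ g))⁻¹ • mulOf μ (0, f) (mulOf μ (0, g) (econst 1, 0)) := by
    rw [mulOf_eq, mulOf_eq]
    refine Prod.ext ?_ ?_
    · funext i
      simp [econst, hc]
    · simp [econst]
  refine not_nil h fun k => ?_
  induction k using Nat.strong_induction_on with
  | _ k ih =>
    rcases k with _ | _ | _ | k
    · simp [powT]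
    · simp [powT]
    · rw [e]
      exact Submodule.smul_mem _ _ (mul_mem_powT μ 0 _ _ (by simp [powT]))
    · rw [e]
      exact Submodule.smul_mem _ _ (mul_mem_powT μ (k+1) _ _ (mul_mem_powT μ k _ _
        (ih (k+1) (by omega))))

structure Good (L : V4 →ₗ[ℂ] V4) (w : V4 →ₗ[ℂ] V4 →ₗ[ℂ] ℂ) : Prop where
  skew : ∀ x y, w x y = - w y x
  rad : ∀ x y, w x (L y) = 0
  cube : ∀ x, L (L (L x)) = 0
  mix : ∀ h f g, w h f • L (L g) = w h g • L (L f)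

lemma good_of {μ : Tensor 1 4} (hJ : IsJordanSuper μ) (h : IsNilpotentT μ) :
    Good (Lop μ) (omg μ) := by
  have hc := nil_c h
  have ho := nil_om h
  have ev : IsHom 0 ((econst 1, 0) : GV 1 4) := Or.inl ⟨rfl, rfl⟩
  have od : ∀ f, IsHom 1 ((0, f) : GV 1 4) := fun f => Or.inr ⟨rfl, rfl⟩
  refine ⟨fun x y => ?_, ho, fun f => ?_, fun h f g => ?_⟩
  · have := hJ.1 1 1 _ _ (od x) (od y)
    rw [mulOf_eq, mulOf_eq] at this
    have := congrFun (congrArg Prod.fst this) 0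
    simpa [econst, sgn] using this
  · have := hJ.2 0 1 0 0 _ _ _ _ ev (od f) ev ev
    have := congrArg Prod.snd this
    simp [superJ, mulOf_eq, econst, sgn, hc] at this
    have h2 : (2:ℂ) • Lop μ (Lop μ (Lop μ f)) = 0 := by
      linear_combination (norm := module) (-1 : ℂ) • this
    simpa using h2
  · have := hJ.2 1 0 1 1 _ _ _ _ (od h) ev (od f) (od g)
    have := congrArg Prod.snd this
    simp [superJ, mulOf_eq, econst, sgn, hc, ho] at this
    linear_combination (norm := module) this

/-! ## Linear algebra classification -/

lemma ext3 (a b c : V4) (h : ∀ α β γ : ℂ, α • a + β • b + γ • c = 0 → α = 0 ∧ β = 0 ∧ γ = 0) :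
    ∃ u, LI4 a b c u := by
  have hne : Submodule.span ℂ {a, b, c} ≠ (⊤ : Submodule ℂ V4) := by
    intro ht
    have h1 : Module.finrank ℂ (Submodule.span ℂ ((({a, b, c} : Finset V4)) : Set V4)) ≤ _ :=
      finrank_span_finset_le_card _
    have h2 : ((({a, b, c} : Finset V4)) : Set V4) = {a, b, c} := by simp
    rw [h2, ht, finrank_top] at h1
    have h3 : ({a, b, c} : Finset V4).card ≤ 3 := Finset.card_le_three
    simp at h1
    omega
  obtain ⟨u, hu⟩ : ∃ u, u ∉ Submodule.span ℂ {a, b, c} := by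
    by_contra! hcon
    exact hne (eq_top_iff.2 fun x _ => hcon x)
  refine ⟨u, fun α β γ δ he => ?_⟩
  have hδ : δ = 0 := by
    by_contra hδ
    apply hu
    rw [Submodule.mem_span_triple]
    refine ⟨-(δ⁻¹ * α), -(δ⁻¹ * β), -(δ⁻¹ * γ), ?_⟩
    have : u = δ⁻¹ • (δ • u) := by rw [smul_smul, inv_mul_cancel₀ hδ, one_smul]
    rw [this]
    linear_combination (norm := module) (-δ⁻¹) • he
  subst hδ
  obtain ⟨h1, h2, h3⟩ := h α β γ (by simpa using he)
  exact ⟨h1, h2, h3, rfl⟩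

lemma ext2 (a b : V4) (h : ∀ α β : ℂ, α • a + β • b = 0 → α = 0 ∧ β = 0) :
    ∃ u v, LI4 a b u v := by
  have hne : Submodule.span ℂ {a, b} ≠ (⊤ : Submodule ℂ V4) := by
    intro ht
    have h1 : Module.finrank ℂ (Submodule.span ℂ ((({a, b} : Finset V4)) : Set V4)) ≤ _ :=
      finrank_span_finset_le_card _
    have h2 : ((({a, b} : Finset V4)) : Set V4) = {a, b} := by simp
    rw [h2, ht, finrank_top] at h1
    have h3 : ({a, b} : Finset V4).card ≤ 2 := Finset.card_le_two
    simp at h1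
    omega
  obtain ⟨u, hu⟩ : ∃ u, u ∉ Submodule.span ℂ {a, b} := by
    by_contra! hcon
    exact hne (eq_top_iff.2 fun x _ => hcon x)
  refine ⟨u, ext3 a b u fun α β δ he => ?_⟩
  have hδ : δ = 0 := by
    by_contra hδ
    apply hu
    rw [Submodule.mem_span_pair]
    refine ⟨-(δ⁻¹ * α), -(δ⁻¹ * β), ?_⟩
    have : u = δ⁻¹ • (δ • u) := by rw [smul_smul, inv_mul_cancel₀ hδ, one_smul]
    rw [this]
    linear_combination (norm := module) (-δ⁻¹) • he
  subst hδ
  obtain ⟨h1, h2⟩ := h α β (by simpa using he)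
  exact ⟨h1, h2, rfl⟩

def Adapted (L : V4 →ₗ[ℂ] V4) (w : V4 →ₗ[ℂ] V4 →ₗ[ℂ] ℂ) (R W : Fin 4 → Fin 4 → ℂ) : Prop :=
  ∃ b : Fin 4 → V4, LI4 (b 0) (b 1) (b 2) (b 3) ∧ (∀ j, L (b j) = ∑ k, R j k • b k) ∧
    ∀ i j, w (b i) (b j) = W i j

section Classify

variable {L : V4 →ₗ[ℂ] V4} {w : V4 →ₗ[ℂ] V4 →ₗ[ℂ] ℂ}

lemma Good.self (hG : Good L w) (x : V4) : w x x = 0 := by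
  have := hG.skew x x
  linear_combination this / 2

lemma Good.rad' (hG : Good L w) (x y : V4) : w (L x) y = 0 := by
  rw [hG.skew, hG.rad, neg_zero]

lemma mkA (hG : Good L w) {R W : Fin 4 → Fin 4 → ℂ} (a b c d : V4) (hli : LI4 a b c d)
    (ha : L a = R 0 0 • a + R 0 1 • b + R 0 2 • c + R 0 3 • d)
    (hb : L b = R 1 0 • a + R 1 1 • b + R 1 2 • c + R 1 3 • d)
    (hc : L c = R 2 0 • a + R 2 1 • b + R 2 2 • c + R 2 3 • d)
    (hd : L d = R 3 0 • a + R 3 1 • b + R 3 2 • c + R 3 3 • d)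
    (hW : ∀ i j, W i j = - W j i)
    (hab : w a b = W 0 1) (hac : w a c = W 0 2) (had : w a d = W 0 3)
    (hbc : w b c = W 1 2) (hbd : w b d = W 1 3) (hcd : w c d = W 2 3) : Adapted L w R W := by
  have hd0 : ∀ i, W i i = 0 := fun i => by linear_combination (hW i i) / 2
  refine ⟨![a, b, c, d], hli, ?_, ?_⟩
  · intro j
    rw [Fin.sum_univ_four]
    fin_cases j
    · exact ha
    · exact hb
    · exact hc
    · exact hd
  · intro i j
    fin_cases i <;> fin_cases j
    · exact (hG.self a).trans (hd0 0).symm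
    · exact hab
    · exact hac
    · exact had
    · exact (hG.skew b a).trans (by rw [hab]; exact (hW 1 0).symm)
    · exact (hG.self b).trans (hd0 1).symm
    · exact hbc
    · exact hbd
    · exact (hG.skew c a).trans (by rw [hac]; exact (hW 2 0).symm)
    · exact (hG.skew c b).trans (by rw [hbc]; exact (hW 2 1).symm)
    · exact (hG.self c).trans (hd0 2).symm
    · exact hcd
    · exact (hG.skew d a).trans (by rw [had]; exact (hW 3 0).symm)
    · exact (hG.skew d b).trans (by rw [hbd]; exact (hW 3 1).symm)
    · exact (hG.skew d c).trans (by rw [hcd]; exact (hW 3 2).symm)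
    · exact (hG.self d).trans (hd0 3).symm

def R0 (i : Fin 9) : Fin 4 → Fin 4 → ℂ := (A14 i).2.1 0
def W0 (i : Fin 9) : Fin 4 → Fin 4 → ℂ := fun j k => (A14 i).2.2 j k 0

lemma A14_eq (i : Fin 9) : A14 i = T14 (R0 i) (W0 i) := by
  fin_cases i <;> rfl

lemma W0_skew (i : Fin 9) (j k : Fin 4) : W0 i j k = - W0 i k j := by
  fin_cases i <;> fin_cases j <;> fin_cases k <;> simp [W0, A14, T14]

/-- the case `L ^ 2 ≠ 0` -/
lemma caseA (hG : Good L w) (g : V4) (hg : L (L g) ≠ 0) : Adapted L w (R0 6) (W0 6) := by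
  have h3 : ∀ α β γ : ℂ, α • L (L g) + β • L g + γ • g = 0 → α = 0 ∧ β = 0 ∧ γ = 0 := by
    intro α β γ h
    have e1 := congrArg (fun x => L (L x)) h
    simp [hG.cube, hg] at e1
    subst e1
    have e2 := congrArg L h
    simp [hG.cube, hg] at e2
    subst e2
    simp [hg] at h
    simp [h]
  obtain ⟨u, hu⟩ := ext3 _ _ _ h3
  obtain ⟨a, b, c, d, hLu⟩ : ∃ a b c d : ℂ,
      L u = a • L (L g) + b • L g + c • g + d • u := by
    have hli : LinearIndependent ℂ ![L (L g), L g, g, u] := by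
      rw [Fintype.linearIndependent_iff]
      intro q hq i
      rw [Fin.sum_univ_four] at hq
      have := hu _ _ _ _ hq
      fin_cases i <;> simp [this]
    let B : Module.Basis (Fin 4) ℂ V4 :=
      basisOfLinearIndependentOfCardEqFinrank hli (by simp)
    have hs := B.sum_repr (L u)
    rw [Fin.sum_univ_four] at hs
    simp only [B, coe_basisOfLinearIndependentOfCardEqFinrank] at hs
    exact ⟨_, _, _, _, hs.symm⟩
  have e2 : L (L u) = b • L (L g) + c • L g + d • L u := by
    conv_lhs => rw [hLu]
    simp [hG.cube]
  have e3 : c • L (L g) + d • L (L u) = 0 := by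
    have := congrArg L e2
    simpa [hG.cube] using this.symm
  rw [e2, hLu] at e3
  have := hu (c + d * b + d * d * a) (d * c + d * d * b) (d * d * c) (d * d * d)
    (by linear_combination (norm := module) e3)
  have hd : d = 0 := by simpa using this.2.2.2
  subst hd
  have hc : c = 0 := by simpa using this.1
  subst hc
  have hf : L (u - a • L g - b • g) = 0 := by
    simp only [map_sub, map_smul, hLu]
    module
  have hw : ∀ h, w h (u - a • L g - b • g) = 0 := by
    intro h
    have := hG.mix h (u - a • L g - b • g) g
    rw [hf] at this
    simpa [hg] using this
  refine mkA hG (L (L g)) (L g) g (u - a • L g - b • g) ?_ ?_ ?_ ?_ ?_ (W0_skew 6)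
    ?_ ?_ ?_ ?_ ?_ ?_
  · intro α β γ δ h
    have := hu α (β - δ * a) (γ - δ * b) δ (by linear_combination (norm := module) h)
    obtain ⟨h1, h2, h3, rfl⟩ := this
    simp at h2 h3
    exact ⟨h1, h2, h3, rfl⟩
  · simp [R0, A14, T14, hG.cube]
  · simp [R0, A14, T14]
  · simp [R0, A14, T14]
  · rw [hf]; simp [R0, A14, T14]
  · rw [hG.rad']; simp [W0, A14, T14]
  · rw [hG.rad']; simp [W0, A14, T14]
  · rw [hw]; simp [W0, A14, T14]
  · rw [hG.rad']; simp [W0, A14, T14]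
  · rw [hw]; simp [W0, A14, T14]
  · rw [hw]; simp [W0, A14, T14]

lemma caseB0 (hG : Good L w) (h2 : ∀ x, L (L x) = 0) (x y : V4)
    (hxy : ∀ α β : ℂ, α • L x + β • L y = 0 → α = 0 ∧ β = 0) :
    LI4 (L x) x (L y) y := by
  intro α β γ δ h
  have e1 := congrArg L h
  simp [h2] at e1
  obtain ⟨rfl, rfl⟩ := hxy _ _ e1
  simp at h
  obtain ⟨rfl, rfl⟩ := hxy _ _ h
  simp

lemma caseB (hG : Good L w) (h2 : ∀ x, L (L x) = 0) (x y : V4)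
    (hxy : ∀ α β : ℂ, α • L x + β • L y = 0 → α = 0 ∧ β = 0) :
    Adapted L w (R0 7) (W0 7) ∨ Adapted L w (R0 8) (W0 8) := by
  by_cases ha : w x y = 0
  · left
    refine mkA hG (L x) x (L y) y (caseB0 hG h2 x y hxy) ?_ ?_ ?_ ?_ (W0_skew 7)
      ?_ ?_ ?_ ?_ ?_ ?_ <;>
    simp [R0, W0, A14, T14, h2, hG.rad, hG.rad', ha]
  · right
    have hxy' : ∀ α β : ℂ, α • L x + β • L ((w x y)⁻¹ • y) = 0 → α = 0 ∧ β = 0 := by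
      intro α β h
      have := hxy α (β * (w x y)⁻¹) (by rw [← h, map_smul, smul_smul])
      simpa [ha] using this
    have h1 : w x ((w x y)⁻¹ • y) = 1 := by simp [ha]
    generalize (w x y)⁻¹ • y = z at *
    refine mkA hG (L x) x (L z) z (caseB0 hG h2 x z hxy') ?_ ?_ ?_ ?_ (W0_skew 8)
      ?_ ?_ ?_ ?_ ?_ ?_ <;>
    simp [R0, W0, A14, T14, h2, hG.rad, hG.rad', h1]

/-- rank one -/
lemma caseC (hG : Good L w) (h2 : ∀ x, L (L x) = 0) (x : V4) (hx : L x ≠ 0)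
    (hr : ∀ y, ∃ c : ℂ, L y = c • L x) :
    Adapted L w (R0 3) (W0 3) ∨ Adapted L w (R0 4) (W0 4) ∨ Adapted L w (R0 5) (W0 5) := by
  choose φ hφ using hr
  by_cases h0 : ∀ p q, w p q = 0
  · left
    obtain ⟨u, v, huv⟩ := ext2 (L x) x (by
      intro α β h
      have e1 := congrArg L h
      simp [h2, hx] at e1
      subst e1
      simpa [hx] using h)
    have hu : L (u - φ u • x) = 0 := by simp [← hφ]
    have hv : L (v - φ v • x) = 0 := by simp [← hφ]
    refine mkA hG (L x) x (u - φ u • x) (v - φ v • x) ?_ ?_ ?_ ?_ ?_ (W0_skew 3)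
      ?_ ?_ ?_ ?_ ?_ ?_
    · intro α β γ δ h
      obtain ⟨rfl, h', rfl, rfl⟩ := huv α (β - γ * φ u - δ * φ v) γ δ
        (by linear_combination (norm := module) h)
      simpa using h'
    · simp [R0, A14, T14, h2]
    · simp [R0, A14, T14]
    · rw [hu]; simp [R0, A14, T14]
    · rw [hv]; simp [R0, A14, T14]
    all_goals rw [h0]; simp [W0, A14, T14]
  · right
    by_cases hk : ∃ p q, L p = 0 ∧ L q = 0 ∧ w p q ≠ 0
    · right
      obtain ⟨p, q0, hp, hq0, hpq0⟩ := hk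
      obtain ⟨q, hq, hpq⟩ : ∃ q, L q = 0 ∧ w p q = 1 :=
        ⟨(w p q0)⁻¹ • q0, by simp [hq0], by simp [hpq0]⟩
      have hqp : w q p = -1 := by rw [hG.skew, hpq]
      obtain ⟨z, hz, hzp, hzq⟩ : ∃ z, L z = L x ∧ w z p = 0 ∧ w z q = 0 :=
        ⟨x - w x q • p + w x p • q, by simp [hp, hq], by simp [hG.self, hqp],
          by simp [hG.self, hpq]⟩
      have hpz : w p z = 0 := by rw [hG.skew, hzp, neg_zero]
      have hqz : w q z = 0 := by rw [hG.skew, hzq, neg_zero]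
      refine mkA hG (L x) z p q ?_ ?_ ?_ ?_ ?_ (W0_skew 5) ?_ ?_ ?_ ?_ ?_ ?_
      · intro α β γ δ h
        have e1 := congrArg L h
        simp [h2, hp, hq, hz, hx] at e1
        subst e1
        have e2 := congrArg (w p) h
        simp [hG.rad, hG.self, hpq] at e2
        subst e2
        have e3 := congrArg (w q) h
        simp [hG.rad, hG.self, hqp] at e3
        subst e3
        simpa [hx] using h
      all_goals simp [R0, W0, A14, T14, h2, hG.rad', hp, hq, hz, hzp, hzq, hpq]
    · left
      push Not at hk
      obtain ⟨p0, hp0, hxp0⟩ : ∃ p, L p = 0 ∧ w x p ≠ 0 := by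
        by_contra! hcon
        apply h0
        intro p q
        have hu : L (p - φ p • x) = 0 := by simp [← hφ]
        have hv : L (q - φ q • x) = 0 := by simp [← hφ]
        have e1 := hk _ _ hu hv
        have e2 := hcon _ hu
        have e3 := hcon _ hv
        have e4 := hG.skew p x
        simp [hG.self] at e1 e2 e3
        rw [e3, e4, e2] at e1
        simpa using e1
      obtain ⟨p, hp, hxp⟩ : ∃ p, L p = 0 ∧ w x p = 1 :=
        ⟨(w x p0)⁻¹ • p0, by simp [hp0], by simp [hxp0]⟩
      obtain ⟨u, hu⟩ := ext3 (L x) x p (by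
        intro α β γ h
        have e1 := congrArg L h
        simp [h2, hp, hx] at e1
        subst e1
        have e2 := congrArg (w x) h
        simp [hG.rad, hxp] at e2
        subst e2
        simpa [hx] using h)
      have hu1 : L (u - φ u • x - w x u • p) = 0 := by simp [← hφ, hp]
      have hu2 : w x (u - φ u • x - w x u • p) = 0 := by simp [hG.self, hxp]
      have hu3 : w p (u - φ u • x - w x u • p) = 0 := hk _ _ hp hu1
      refine mkA hG (L x) x p (u - φ u • x - w x u • p) ?_ ?_ ?_ ?_ ?_ (W0_skew 4)
        ?_ ?_ ?_ ?_ ?_ ?_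
      · intro α β γ δ h
        obtain ⟨rfl, h1, h3, rfl⟩ := hu α (β - δ * φ u) (γ - δ * w x u) δ
          (by linear_combination (norm := module) h)
        simp at h1 h3
        simp [h1, h3]
      · simp [R0, A14, T14, h2]
      · simp [R0, A14, T14]
      · simp [R0, A14, T14, hp]
      · rw [hu1]; simp [R0, A14, T14]
      · rw [hG.rad']; simp [W0, A14, T14]
      · rw [hG.rad']; simp [W0, A14, T14]
      · rw [hG.rad']; simp [W0, A14, T14]
      · rw [hxp]; simp [W0, A14, T14]
      · rw [hu2]; simp [W0, A14, T14]
      · rw [hu3]; simp [W0, A14, T14]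

lemma caseD (hG : Good L w) (h0 : ∀ x, L x = 0) :
    Adapted L w (R0 0) (W0 0) ∨ Adapted L w (R0 1) (W0 1) ∨ Adapted L w (R0 2) (W0 2) := by
  by_cases hw : ∀ p q, w p q = 0
  · left
    refine mkA hG (Pi.single 0 1) (Pi.single 1 1) (Pi.single 2 1) (Pi.single 3 1)
      ?_ ?_ ?_ ?_ ?_ (W0_skew 0) ?_ ?_ ?_ ?_ ?_ ?_
    · intro α β γ δ h
      have e0 := congrFun h 0
      have e1 := congrFun h 1
      have e2 := congrFun h 2
      have e3 := congrFun h 3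
      simp at e0 e1 e2 e3
      exact ⟨e0, e1, e2, e3⟩
    all_goals simp [R0, W0, A14, T14, hw, h0]
  · right
    push Not at hw
    obtain ⟨p, q0, hpq0⟩ := hw
    obtain ⟨q, hpq⟩ : ∃ q, w p q = 1 := ⟨(w p q0)⁻¹ • q0, by simp [hpq0]⟩
    have hqp : w q p = -1 := by rw [hG.skew, hpq]
    obtain ⟨u, v, huv⟩ := ext2 p q (by
      intro α β h
      have e1 := congrArg (w p) h
      simp [hG.self, hpq] at e1
      have e2 := congrArg (w q) h
      simp [hG.self, hqp] at e2
      exact ⟨e2, e1⟩)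
    obtain ⟨u', hu1, hu2, v', hv1, hv2, hli⟩ : ∃ u', w p u' = 0 ∧ w q u' = 0 ∧
        ∃ v', w p v' = 0 ∧ w q v' = 0 ∧ LI4 p q u' v' := by
      refine ⟨u + w q u • p - w p u • q, by simp [hG.self, hpq], by simp [hG.self, hqp],
        v + w q v • p - w p v • q, by simp [hG.self, hpq], by simp [hG.self, hqp], ?_⟩
      intro α β γ δ h
      obtain ⟨h1, h3, rfl, rfl⟩ := huv (α + γ * w q u + δ * w q v) (β - γ * w p u - δ * w p v) γ δ
          (by linear_combination (norm := module) h)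
      simp at h1 h3
      simp [h1, h3]
    by_cases ha : w u' v' = 0
    · left
      refine mkA hG p q u' v' hli ?_ ?_ ?_ ?_ (W0_skew 1) ?_ ?_ ?_ ?_ ?_ ?_ <;>
      simp [R0, W0, A14, T14, h0, hpq, hu1, hu2, hv1, hv2, ha]
    · right
      refine mkA hG p q u' ((w u' v')⁻¹ • v') ?_ ?_ ?_ ?_ ?_ (W0_skew 2) ?_ ?_ ?_ ?_ ?_ ?_
      · intro α β γ δ h
        have := hli α β γ (δ * (w u' v')⁻¹) (by rw [← h, smul_smul])
        simpa [ha] using this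
      all_goals simp [R0, W0, A14, T14, h0, hpq, hu1, hu2, hv1, hv2, ha]

lemma classify (hG : Good L w) : ∃ i, Adapted L w (R0 i) (W0 i) := by
  by_cases h2 : ∀ x, L (L x) = 0
  swap
  · push Not at h2
    obtain ⟨g, hg⟩ := h2
    exact ⟨_, caseA hG g hg⟩
  by_cases h0 : ∀ x, L x = 0
  · rcases caseD hG h0 with h | h | h <;> exact ⟨_, h⟩
  push Not at h0
  obtain ⟨x, hx⟩ := h0
  by_cases hr : ∀ y, ∃ c : ℂ, L y = c • L x
  · rcases caseC hG h2 x hx hr with h | h | h <;> exact ⟨_, h⟩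
  push Not at hr
  obtain ⟨y, hy⟩ := hr
  rcases caseB hG h2 x y (by
    intro α β h
    have hβ : β = 0 := by
      by_contra hβ
      apply hy (-(β⁻¹ * α))
      have : L y = β⁻¹ • (β • L y) := by rw [smul_smul, inv_mul_cancel₀ hβ, one_smul]
      rw [this]
      linear_combination (norm := module) (β⁻¹) • h
    subst hβ
    simpa [hx] using h) with h | h <;> exact ⟨_, h⟩

end Classify

lemma exists_iso {μ : Tensor 1 4} (hJ : IsJordanSuper μ) (h : IsNilpotentT μ) :
    ∃ i, Iso μ (A14 i) := by
  obtain ⟨i, b, h1, h2, h3⟩ := classify (good_of hJ h)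
  exact ⟨i, by rw [A14_eq]; exact iso_of_basis (nil_c h) b h1 h2 h3⟩

/-! ## Invariants -/

lemma iso_data {μ ν : Tensor 1 4} (hμ : μ.1 0 0 0 = 0) (hν : ν.1 0 0 0 = 0) (h : Iso μ ν) :
    ∃ (t : ℂ) (S : V4 ≃ₗ[ℂ] V4), t ≠ 0 ∧ (∀ x, S (Lop μ x) = t • Lop ν (S x)) ∧
      ∀ x y, t * omg μ x y = omg ν (S x) (S y) := by
  obtain ⟨T, S, h⟩ := h
  have hT : ∀ a, T (econst a) = econst (a * T (econst 1) 0) := by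
    intro a
    have : econst a = a • econst 1 := by funext i; simp [econst]
    rw [this, map_smul]
    funext i
    obtain rfl : i = 0 := Subsingleton.elim _ _
    simp [econst]
  refine ⟨T (econst 1) 0, S, ?_, ?_, ?_⟩
  · intro h0
    have h1 := hT 1
    rw [h0, mul_zero, econst_zero, LinearEquiv.map_eq_zero_iff] at h1
    have := congrFun h1 0
    simp [econst] at this
  · intro x
    have := h (econst 1, 0) (0, x)
    rw [mulOf_eq, mulOf_eq] at this
    have := congrArg Prod.snd this
    simpa [econst] using this
  · intro x y
    have := h (0, x) (0, y)
    rw [mulOf_eq, mulOf_eq] at this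
    have := congrFun (congrArg Prod.fst this) 0
    dsimp only at this
    rw [hT] at this
    simp [econst] at this
    linear_combination this

def inv (k : Fin 6) (μ : Tensor 1 4) : Prop :=
  match k with
  | 0 => ∀ x, Lop μ x = 0
  | 1 => ∀ x, Lop μ (Lop μ x) = 0
  | 2 => ∃ v, ∀ x, ∃ c : ℂ, Lop μ x = c • v
  | 3 => ∀ x y, omg μ x y = 0
  | 4 => ∀ x, (∀ y, omg μ x y = 0) → x = 0
  | 5 => ∀ x y, Lop μ x = 0 → Lop μ y = 0 → omg μ x y = 0

lemma inv_iso {μ ν : Tensor 1 4} (hμ : μ.1 0 0 0 = 0) (hν : ν.1 0 0 0 = 0) (h : Iso μ ν)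
    (k : Fin 6) (hk : inv k ν) : inv k μ := by
  obtain ⟨t, S, ht, hL, hw⟩ := iso_data hμ hν h
  fin_cases k <;> simp only [inv] at hk ⊢
  · intro x
    apply S.injective
    rw [hL, hk]; simp
  · intro x
    apply S.injective
    rw [hL, hL, map_smul, hk]; simp
  · obtain ⟨v, hv⟩ := hk
    refine ⟨S.symm v, fun x => ?_⟩
    obtain ⟨c, hc⟩ := hv (S x)
    refine ⟨t * c, ?_⟩
    apply S.injective
    rw [hL, hc]; simp [smul_smul]
  · intro x y
    have := hw x y
    rw [hk] at this
    simpa [ht] using this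
  · intro x hx
    have : S x = 0 := by
      apply hk
      intro y
      have := hw x (S.symm y)
      rw [hx] at this
      simpa using this.symm
    simpa using this
  · intro x y hx hy
    have e1 := hL x
    have e2 := hL y
    rw [hx] at e1
    rw [hy] at e2
    have := hw x y
    rw [hk _ _ (by simpa [ht] using e1.symm) (by simpa [ht] using e2.symm)] at this
    simpa [ht] using this

lemma A14_c (i : Fin 9) : (A14 i).1 0 0 0 = 0 := by
  rw [A14_eq]; rfl

def tab : Fin 6 → Fin 9 → Bool :=
  ![![true, true, true, false, false, false, false, false, false],
    ![true, true, true, true, true, true, false, true, true],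
    ![true, true, true, true, true, true, false, false, false],
    ![true, false, false, true, false, false, true, true, false],
    ![false, false, true, false, false, false, false, false, false],
    ![true, false, false, true, true, false, true, true, true]]

lemma Lop_A (i : Fin 9) (x : V4) (k : Fin 4) : Lop (A14 i) x k = ∑ j, x j * R0 i j k := rfl

lemma omg_A (i : Fin 9) (x y : V4) :
    omg (A14 i) x y = ∑ j, ∑ k, x j * y k * W0 i j k := rfl

lemma LA0 (x : V4) : Lop (A14 0) x = 0 := by
  funext k
  rw [Lop_A]
  fin_cases k <;> simp [Fin.sum_univ_four, R0, A14, T14]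

lemma WA0 (x y : V4) : omg (A14 0) x y = 0 := by
  rw [omg_A]
  simp [Fin.sum_univ_four, W0, A14, T14]

lemma LA1 (x : V4) : Lop (A14 1) x = 0 := by
  funext k
  rw [Lop_A]
  fin_cases k <;> simp [Fin.sum_univ_four, R0, A14, T14]

lemma WA1 (x y : V4) : omg (A14 1) x y = x 0 * y 1 - x 1 * y 0 := by
  rw [omg_A]
  simp [Fin.sum_univ_four, W0, A14, T14]
  try ring

lemma LA2 (x : V4) : Lop (A14 2) x = 0 := by
  funext k
  rw [Lop_A]
  fin_cases k <;> simp [Fin.sum_univ_four, R0, A14, T14]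

lemma WA2 (x y : V4) : omg (A14 2) x y = x 0 * y 1 - x 1 * y 0 + (x 2 * y 3 - x 3 * y 2) := by
  rw [omg_A]
  simp [Fin.sum_univ_four, W0, A14, T14]
  try ring

lemma LA3 (x : V4) : Lop (A14 3) x = ![x 1, 0, 0, 0] := by
  funext k
  rw [Lop_A]
  fin_cases k <;> simp [Fin.sum_univ_four, R0, A14, T14]

lemma WA3 (x y : V4) : omg (A14 3) x y = 0 := by
  rw [omg_A]
  simp [Fin.sum_univ_four, W0, A14, T14]

lemma LA4 (x : V4) : Lop (A14 4) x = ![x 1, 0, 0, 0] := by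
  funext k
  rw [Lop_A]
  fin_cases k <;> simp [Fin.sum_univ_four, R0, A14, T14]

lemma WA4 (x y : V4) : omg (A14 4) x y = x 1 * y 2 - x 2 * y 1 := by
  rw [omg_A]
  simp [Fin.sum_univ_four, W0, A14, T14]
  try ring

lemma LA5 (x : V4) : Lop (A14 5) x = ![x 1, 0, 0, 0] := by
  funext k
  rw [Lop_A]
  fin_cases k <;> simp [Fin.sum_univ_four, R0, A14, T14]

lemma WA5 (x y : V4) : omg (A14 5) x y = x 2 * y 3 - x 3 * y 2 := by
  rw [omg_A]
  simp [Fin.sum_univ_four, W0, A14, T14]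
  try ring

lemma LA6 (x : V4) : Lop (A14 6) x = ![x 1, x 2, 0, 0] := by
  funext k
  rw [Lop_A]
  fin_cases k <;> simp [Fin.sum_univ_four, R0, A14, T14]

lemma WA6 (x y : V4) : omg (A14 6) x y = 0 := by
  rw [omg_A]
  simp [Fin.sum_univ_four, W0, A14, T14]

lemma LA7 (x : V4) : Lop (A14 7) x = ![x 1, 0, x 3, 0] := by
  funext k
  rw [Lop_A]
  fin_cases k <;> simp [Fin.sum_univ_four, R0, A14, T14]

lemma WA7 (x y : V4) : omg (A14 7) x y = 0 := by
  rw [omg_A]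
  simp [Fin.sum_univ_four, W0, A14, T14]

lemma LA8 (x : V4) : Lop (A14 8) x = ![x 1, 0, x 3, 0] := by
  funext k
  rw [Lop_A]
  fin_cases k <;> simp [Fin.sum_univ_four, R0, A14, T14]

lemma WA8 (x y : V4) : omg (A14 8) x y = x 1 * y 3 - x 3 * y 1 := by
  rw [omg_A]
  simp [Fin.sum_univ_four, W0, A14, T14]
  try ring

lemma tb0 : ∀ i : Fin 9, inv 0 (A14 i) ↔ tab 0 i = true
  | 0 => by
    refine iff_of_true ?_ (by simp [tab])
    simp only [inv]
    intro x; simp [LA0]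
  | 1 => by
    refine iff_of_true ?_ (by simp [tab])
    simp only [inv]
    intro x; simp [LA1]
  | 2 => by
    refine iff_of_true ?_ (by simp [tab])
    simp only [inv]
    intro x; simp [LA2]
  | 3 => by
    refine iff_of_false ?_ (by simp [tab])
    simp only [inv]
    intro h
    have := congrFun (h (Pi.single 1 1)) 0
    simp [LA3] at this
  | 4 => by
    refine iff_of_false ?_ (by simp [tab])
    simp only [inv]
    intro h
    have := congrFun (h (Pi.single 1 1)) 0
    simp [LA4] at this
  | 5 => by
    refine iff_of_false ?_ (by simp [tab])
    simp only [inv]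
    intro h
    have := congrFun (h (Pi.single 1 1)) 0
    simp [LA5] at this
  | 6 => by
    refine iff_of_false ?_ (by simp [tab])
    simp only [inv]
    intro h
    have := congrFun (h (Pi.single 1 1)) 0
    simp [LA6] at this
  | 7 => by
    refine iff_of_false ?_ (by simp [tab])
    simp only [inv]
    intro h
    have := congrFun (h (Pi.single 1 1)) 0
    simp [LA7] at this
  | 8 => by
    refine iff_of_false ?_ (by simp [tab])
    simp only [inv]
    intro h
    have := congrFun (h (Pi.single 1 1)) 0
    simp [LA8] at this

lemma tb1 : ∀ i : Fin 9, inv 1 (A14 i) ↔ tab 1 i = true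
  | 0 => by
    refine iff_of_true ?_ (by simp [tab])
    simp only [inv]
    intro x; simp [LA0]
  | 1 => by
    refine iff_of_true ?_ (by simp [tab])
    simp only [inv]
    intro x; simp [LA1]
  | 2 => by
    refine iff_of_true ?_ (by simp [tab])
    simp only [inv]
    intro x; simp [LA2]
  | 3 => by
    refine iff_of_true ?_ (by simp [tab])
    simp only [inv]
    intro x; simp [LA3]
  | 4 => by
    refine iff_of_true ?_ (by simp [tab])
    simp only [inv]
    intro x; simp [LA4]
  | 5 => by
    refine iff_of_true ?_ (by simp [tab])
    simp only [inv]
    intro x; simp [LA5]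
  | 6 => by
    refine iff_of_false ?_ (by simp [tab])
    simp only [inv]
    intro h
    have := congrFun (h (Pi.single 2 1)) 0
    simp [LA6] at this
  | 7 => by
    refine iff_of_true ?_ (by simp [tab])
    simp only [inv]
    intro x; simp [LA7]
  | 8 => by
    refine iff_of_true ?_ (by simp [tab])
    simp only [inv]
    intro x; simp [LA8]

lemma tb2 : ∀ i : Fin 9, inv 2 (A14 i) ↔ tab 2 i = true
  | 0 => by
    refine iff_of_true ?_ (by simp [tab])
    simp only [inv]
    exact ⟨Pi.single 0 1, fun x => ⟨0, by rw [LA0]; funext k; fin_cases k <;> simp⟩⟩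
  | 1 => by
    refine iff_of_true ?_ (by simp [tab])
    simp only [inv]
    exact ⟨Pi.single 0 1, fun x => ⟨0, by rw [LA1]; funext k; fin_cases k <;> simp⟩⟩
  | 2 => by
    refine iff_of_true ?_ (by simp [tab])
    simp only [inv]
    exact ⟨Pi.single 0 1, fun x => ⟨0, by rw [LA2]; funext k; fin_cases k <;> simp⟩⟩
  | 3 => by
    refine iff_of_true ?_ (by simp [tab])
    simp only [inv]
    exact ⟨Pi.single 0 1, fun x => ⟨x 1, by rw [LA3]; funext k; fin_cases k <;> simp⟩⟩
  | 4 => by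
    refine iff_of_true ?_ (by simp [tab])
    simp only [inv]
    exact ⟨Pi.single 0 1, fun x => ⟨x 1, by rw [LA4]; funext k; fin_cases k <;> simp⟩⟩
  | 5 => by
    refine iff_of_true ?_ (by simp [tab])
    simp only [inv]
    exact ⟨Pi.single 0 1, fun x => ⟨x 1, by rw [LA5]; funext k; fin_cases k <;> simp⟩⟩
  | 6 => by
    refine iff_of_false ?_ (by simp [tab])
    simp only [inv]
    intro h
    obtain ⟨v, hv⟩ := h
    obtain ⟨c, hc⟩ := hv (Pi.single 1 1)
    obtain ⟨d, hd⟩ := hv (Pi.single 2 1)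
    rw [LA6] at hc hd
    have e1 := congrFun hc 0
    have e2 := congrFun hc 1
    have e3 := congrFun hd 0
    have e4 := congrFun hd 1
    simp at e1 e2 e3 e4
    grind
  | 7 => by
    refine iff_of_false ?_ (by simp [tab])
    simp only [inv]
    intro h
    obtain ⟨v, hv⟩ := h
    obtain ⟨c, hc⟩ := hv (Pi.single 1 1)
    obtain ⟨d, hd⟩ := hv (Pi.single 3 1)
    rw [LA7] at hc hd
    have e1 := congrFun hc 0
    have e2 := congrFun hc 2
    have e3 := congrFun hd 0
    have e4 := congrFun hd 2
    simp at e1 e2 e3 e4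
    grind
  | 8 => by
    refine iff_of_false ?_ (by simp [tab])
    simp only [inv]
    intro h
    obtain ⟨v, hv⟩ := h
    obtain ⟨c, hc⟩ := hv (Pi.single 1 1)
    obtain ⟨d, hd⟩ := hv (Pi.single 3 1)
    rw [LA8] at hc hd
    have e1 := congrFun hc 0
    have e2 := congrFun hc 2
    have e3 := congrFun hd 0
    have e4 := congrFun hd 2
    simp at e1 e2 e3 e4
    grind

lemma tb3 : ∀ i : Fin 9, inv 3 (A14 i) ↔ tab 3 i = true
  | 0 => by
    refine iff_of_true ?_ (by simp [tab])
    simp only [inv]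
    exact WA0
  | 1 => by
    refine iff_of_false ?_ (by simp [tab])
    simp only [inv]
    intro h
    have := h (Pi.single 0 1) (Pi.single 1 1)
    simp [WA1] at this
  | 2 => by
    refine iff_of_false ?_ (by simp [tab])
    simp only [inv]
    intro h
    have := h (Pi.single 0 1) (Pi.single 1 1)
    simp [WA2] at this
  | 3 => by
    refine iff_of_true ?_ (by simp [tab])
    simp only [inv]
    exact WA3
  | 4 => by
    refine iff_of_false ?_ (by simp [tab])
    simp only [inv]
    intro h
    have := h (Pi.single 1 1) (Pi.single 2 1)
    simp [WA4] at this
  | 5 => by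
    refine iff_of_false ?_ (by simp [tab])
    simp only [inv]
    intro h
    have := h (Pi.single 2 1) (Pi.single 3 1)
    simp [WA5] at this
  | 6 => by
    refine iff_of_true ?_ (by simp [tab])
    simp only [inv]
    exact WA6
  | 7 => by
    refine iff_of_true ?_ (by simp [tab])
    simp only [inv]
    exact WA7
  | 8 => by
    refine iff_of_false ?_ (by simp [tab])
    simp only [inv]
    intro h
    have := h (Pi.single 1 1) (Pi.single 3 1)
    simp [WA8] at this

lemma tb4 : ∀ i : Fin 9, inv 4 (A14 i) ↔ tab 4 i = true
  | 0 => by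
    refine iff_of_false ?_ (by simp [tab])
    simp only [inv]
    intro h
    have := congrFun (h (Pi.single 0 1) (fun y => by simp [WA0])) 0
    simp at this
  | 1 => by
    refine iff_of_false ?_ (by simp [tab])
    simp only [inv]
    intro h
    have := congrFun (h (Pi.single 2 1) (fun y => by simp [WA1])) 2
    simp at this
  | 2 => by
    refine iff_of_true ?_ (by simp [tab])
    simp only [inv]
    intro x h
    simp only [WA2] at h
    have h0 := h (Pi.single 0 1)
    have h1 := h (Pi.single 1 1)
    have h2 := h (Pi.single 2 1)
    have h3 := h (Pi.single 3 1)
    simp at h0 h1 h2 h3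
    funext k
    fin_cases k <;> simp [h0, h1, h2, h3]
  | 3 => by
    refine iff_of_false ?_ (by simp [tab])
    simp only [inv]
    intro h
    have := congrFun (h (Pi.single 0 1) (fun y => by simp [WA3])) 0
    simp at this
  | 4 => by
    refine iff_of_false ?_ (by simp [tab])
    simp only [inv]
    intro h
    have := congrFun (h (Pi.single 0 1) (fun y => by simp [WA4])) 0
    simp at this
  | 5 => by
    refine iff_of_false ?_ (by simp [tab])
    simp only [inv]
    intro h
    have := congrFun (h (Pi.single 0 1) (fun y => by simp [WA5])) 0
    simp at this
  | 6 => by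
    refine iff_of_false ?_ (by simp [tab])
    simp only [inv]
    intro h
    have := congrFun (h (Pi.single 0 1) (fun y => by simp [WA6])) 0
    simp at this
  | 7 => by
    refine iff_of_false ?_ (by simp [tab])
    simp only [inv]
    intro h
    have := congrFun (h (Pi.single 0 1) (fun y => by simp [WA7])) 0
    simp at this
  | 8 => by
    refine iff_of_false ?_ (by simp [tab])
    simp only [inv]
    intro h
    have := congrFun (h (Pi.single 0 1) (fun y => by simp [WA8])) 0
    simp at this

lemma tb5 : ∀ i : Fin 9, inv 5 (A14 i) ↔ tab 5 i = true
  | 0 => by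
    refine iff_of_true ?_ (by simp [tab])
    simp only [inv]
    intro x y _ _; exact WA0 x y
  | 1 => by
    refine iff_of_false ?_ (by simp [tab])
    simp only [inv]
    intro h
    have := h (Pi.single 0 1) (Pi.single 1 1) (LA1 _) (LA1 _)
    simp [WA1] at this
  | 2 => by
    refine iff_of_false ?_ (by simp [tab])
    simp only [inv]
    intro h
    have := h (Pi.single 0 1) (Pi.single 1 1) (LA2 _) (LA2 _)
    simp [WA2] at this
  | 3 => by
    refine iff_of_true ?_ (by simp [tab])
    simp only [inv]
    intro x y _ _; exact WA3 x y
  | 4 => by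
    refine iff_of_true ?_ (by simp [tab])
    simp only [inv]
    intro x y hx hy
    rw [LA4] at hx hy
    have h0 := congrFun hx 0
    have h1 := congrFun hy 0
    simp at h0 h1
    simp [WA4, h0, h1]
  | 5 => by
    refine iff_of_false ?_ (by simp [tab])
    simp only [inv]
    intro h
    have := h (Pi.single 2 1) (Pi.single 3 1) (by rw [LA5]; funext k; fin_cases k <;> simp) (by rw [LA5]; funext k; fin_cases k <;> simp)
    simp [WA5] at this
  | 6 => by
    refine iff_of_true ?_ (by simp [tab])
    simp only [inv]
    intro x y _ _; exact WA6 x y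
  | 7 => by
    refine iff_of_true ?_ (by simp [tab])
    simp only [inv]
    intro x y _ _; exact WA7 x y
  | 8 => by
    refine iff_of_true ?_ (by simp [tab])
    simp only [inv]
    intro x y hx hy
    rw [LA8] at hx hy
    have h0 := congrFun hx 0
    have h1 := congrFun hy 0
    simp at h0 h1
    simp [WA8, h0, h1]

lemma tb (k : Fin 6) (i : Fin 9) : inv k (A14 i) ↔ tab k i = true := by
  fin_cases k
  · exact tb0 i
  · exact tb1 i
  · exact tb2 i
  · exact tb3 i
  · exact tb4 i
  · exact tb5 i

lemma tab_inj : ∀ i j : Fin 9, (∀ k, tab k i = tab k j) → i = j := by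
  decide

lemma pairwise_iso (i j : Fin 9) (h : Iso (A14 i) (A14 j)) : i = j := by
  apply tab_inj
  intro k
  rw [Bool.eq_iff_iff, ← tb, ← tb]
  exact ⟨inv_iso (A14_c j) (A14_c i) h.symm k, inv_iso (A14_c i) (A14_c j) h k⟩

/-- every nilpotent Jordan superalgebra of type (1,4) is isomorphic to
exactly one of the nine listed superalgebras; in particular these are pairwise
non-isomorphic. -/
theorem stmt1 :
    (∀ μ : Tensor 1 4, IsJordanSuper μ → IsNilpotentT μ → ∃! i : Fin 9, Iso μ (A14 i)) ∧
    (∀ i j : Fin 9, Iso (A14 i) (A14 j) → i = j) := by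
  refine ⟨fun μ hJ hn => ?_, pairwise_iso⟩
  obtain ⟨i, hi⟩ := exists_iso hJ hn
  exact ⟨i, hi, fun j hj => pairwise_iso _ _ (Iso.trans (Iso.symm hj) hi)⟩

end
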